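/- Let R be a commutative ring and n a natural number. For x \in R, let M_n(x) be the 2^n \times 2^n matrix over R whose (j, k) entry (with 0 \le j, k \le 2^n - 1) equals x^{s(j-k)} if k \le j and s(k) + s(j-k) = s(j) (i.e., the pair (k, j-k) is carry-free), and equals 0 otherwise. Then for all x, y \in R, the matrix product satisfies M_n(x) \cdot M_n(y) = M_n(x + y); that is, the finite Sierpinski matrices form a one-parameter family additive under matrix multiplication. -/

import Mathlib

/-- `s k` is the sum of the binary digits of `k`. -/
def s (k : ℕ) : ℕ := (Nat.digits 2 k).sum

/-- The `2^n × 2^n` Sierpinski matrix `Mₙ(x)`: its `(j, k)` entry equals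
`x^{s(j-k)}` if `k ≤ j` and the pair `(k, j-k)` is carry-free
(i.e. `s(k) + s(j-k) = s(j)`), and equals `0` otherwise. -/
def sierpinskiMat {R : Type*} [CommRing R] (n : ℕ) (x : R) :
    Matrix (Fin (2 ^ n)) (Fin (2 ^ n)) R :=
  Matrix.of fun j k =>
    if (k : ℕ) ≤ (j : ℕ) ∧ s (k : ℕ) + s ((j : ℕ) - (k : ℕ)) = s (j : ℕ) then
      x ^ s ((j : ℕ) - (k : ℕ))
    else 0

theorem s_even (k : ℕ) : s (2 * k) = s k := by
  unfold s
  rcases Nat.eq_zero_or_pos k with rfl | h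
  · simp
  · rw [Nat.digits_def' (by norm_num) (by omega)]
    simp

theorem s_odd (k : ℕ) : s (2 * k + 1) = s k + 1 := by
  unfold s
  rw [Nat.digits_def' (by norm_num) (by omega)]
  have h1 : (2 * k + 1) % 2 = 1 := by omega
  have h2 : (2 * k + 1) / 2 = k := by omega
  rw [h1, h2, List.sum_cons, add_comm]

theorem s_succ_le (a : ℕ) : s (a + 1) ≤ s a + 1 := by
  induction a using Nat.strong_induction_on with
  | _ a ih =>
    rcases Nat.even_or_odd' a with ⟨c, rfl | rfl⟩
    · rw [s_odd, s_even]
    · have := ih c (by omega)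
      rw [show 2 * c + 1 + 1 = 2 * (c + 1) by ring, s_even, s_odd]
      omega

theorem s_add_le (a b : ℕ) : s (a + b) ≤ s a + s b := by
  induction a using Nat.strong_induction_on generalizing b with
  | _ a ih =>
    rcases Nat.eq_zero_or_pos a with rfl | ha
    · simp
    rcases Nat.even_or_odd' a with ⟨c, rfl | rfl⟩ <;>
      rcases Nat.even_or_odd' b with ⟨d, rfl | rfl⟩
    · rw [← mul_add, s_even, s_even, s_even]
      exact ih c (by omega) d
    · rw [show 2 * c + (2 * d + 1) = 2 * (c + d) + 1 by ring, s_odd, s_even, s_odd]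
      have := ih c (by omega) d
      omega
    · rw [show 2 * c + 1 + 2 * d = 2 * (c + d) + 1 by ring, s_odd, s_even, s_odd]
      have := ih c (by omega) d
      omega
    · rw [show 2 * c + 1 + (2 * d + 1) = 2 * (c + d + 1) by ring, s_even, s_odd, s_odd]
      have := ih c (by omega) d
      have := s_succ_le (c + d)
      omega

/-- The entries of the Sierpinski matrix, indexed by natural numbers. -/
def sEntry {R : Type*} [CommRing R] (x : R) (j k : ℕ) : R :=
  if k ≤ j ∧ s k + s (j - k) = s j then x ^ s (j - k) else 0

section
variable {R : Type*} [CommRing R] (x : R) (j k : ℕ)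

theorem sEntry_00 : sEntry x (2 * j) (2 * k) = sEntry x j k := by
  unfold sEntry
  rw [← Nat.mul_sub, s_even, s_even, s_even]
  simp

theorem sEntry_11 : sEntry x (2 * j + 1) (2 * k + 1) = sEntry x j k := by
  unfold sEntry
  rw [show 2 * j + 1 - (2 * k + 1) = 2 * (j - k) by omega, s_even, s_odd, s_odd]
  congr 1
  apply propext
  omega

theorem sEntry_10 : sEntry x (2 * j + 1) (2 * k) = x * sEntry x j k := by
  unfold sEntry
  by_cases h : k ≤ j
  · rw [show 2 * j + 1 - 2 * k = 2 * (j - k) + 1 by omega, s_even, s_odd, s_odd]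
    by_cases h2 : s k + s (j - k) = s j
    · rw [if_pos ⟨by omega, by omega⟩, if_pos ⟨h, h2⟩, pow_succ']
    · rw [if_neg (by omega), if_neg (by omega), mul_zero]
  · rw [if_neg (by omega), if_neg (by omega), mul_zero]

theorem sEntry_01 : sEntry x (2 * j) (2 * k + 1) = 0 := by
  unfold sEntry
  apply if_neg
  rintro ⟨h1, h2⟩
  rw [show 2 * j - (2 * k + 1) = 2 * (j - k - 1) + 1 by omega, s_even, s_odd, s_odd] at h2
  have h3 := s_add_le (k + 1) (j - k - 1)
  rw [show k + 1 + (j - k - 1) = j by omega] at h3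
  have := s_succ_le k
  omega

end

theorem sum_range_double {R : Type*} [CommRing R] (f : ℕ → R) (N : ℕ) :
    ∑ i ∈ Finset.range (2 * N), f i = ∑ i ∈ Finset.range N, (f (2 * i) + f (2 * i + 1)) := by
  induction N with
  | zero => simp
  | succ N ih =>
    rw [show 2 * (N + 1) = 2 * N + 1 + 1 by ring, Finset.sum_range_succ, Finset.sum_range_succ,
      ih, Finset.sum_range_succ, add_assoc]

theorem sEntry_mul {R : Type*} [CommRing R] (x y : R) (n : ℕ) :
    ∀ j k : ℕ, j < 2 ^ n → k < 2 ^ n →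
      ∑ m ∈ Finset.range (2 ^ n), sEntry x j m * sEntry y m k = sEntry (x + y) j k := by
  induction n with
  | zero =>
    intro j k hj hk
    obtain rfl : j = 0 := by simpa using hj
    obtain rfl : k = 0 := by simpa using hk
    simp [sEntry, s]
  | succ n ih =>
    intro j k hj hk
    rw [pow_succ'] at hj hk ⊢
    rw [sum_range_double]
    rcases Nat.even_or_odd' j with ⟨c, rfl | rfl⟩ <;>
      rcases Nat.even_or_odd' k with ⟨d, rfl | rfl⟩ <;>
      have h := ih c d (by omega) (by omega) <;>
      simp only [sEntry_00, sEntry_01, sEntry_10, sEntry_11, zero_mul, mul_zero, add_zero,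
        zero_add, Finset.sum_const_zero]
    · exact h
    · rw [← h, Finset.mul_sum]
      exact Finset.sum_congr rfl fun m _ => by ring
    · exact h

/-- The finite Sierpinski matrices form a one-parameter family additive under
matrix multiplication: `Mₙ(x) * Mₙ(y) = Mₙ(x + y)`. -/
theorem sierpinskiMat_mul {R : Type*} [CommRing R] (n : ℕ) (x y : R) :
    sierpinskiMat n x * sierpinskiMat n y = sierpinskiMat n (x + y) := by
  ext j k
  rw [Matrix.mul_apply]
  have h := sEntry_mul x y n j k j.2 k.2
  rw [Finset.sum_range] at h
  exact h
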